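/- Let c, g, d, ω, Ξ be positive real numbers, let P be a nonempty finite set, and let ωfreq : P → ℝ take values in [a, b] with a < b and attain both a and b on P. For a probability weight vector γ : P → [0, ∞) with Σ_p γ_p = 1, define the effective bandwidth β(γ) = √( Σ_p γ_p·ωfreq_p² − (Σ_p γ_p·ωfreq_p)² ). Then the set { c²/(g·x·β(γ)²) + c²·d²/(g·(1−x)·ω²·Ξ²) : x ∈ (0,1), γ a probability weight vector on P with β(γ) > 0 } has least element (1/g)·(2c/(b − a) + c·d/(ω·Ξ))². -/

import Mathlib

/-!
With `A = 2c/(b-a)` and `B = cd/(ωΞ)`, Popoviciu's variance inequality `β(γ)² ≤ ((b-a)/2)²` bounds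
the first summand below by `A²/(gx)`, and the Cauchy–Schwarz inequality in the form
`(A+B)² ≤ A²/x + B²/(1-x)` then gives the lower bound. Both inequalities are equalities when
`γ` puts weight `1/2` on a subcarrier at each edge and `x = A/(A+B)`.
-/

/-- Popoviciu's inequality, from averaging `0 ≤ (f p - a)(b - f p)` against `γ`. -/
theorem weighted_variance_le {ι : Type*} [Fintype ι] (f γ : ι → ℝ) (a b : ℝ)
    (hf : ∀ p, f p ∈ Set.Icc a b) (h0 : ∀ p, 0 ≤ γ p) (h1 : ∑ p, γ p = 1) :
    (∑ p, γ p * f p ^ 2) - (∑ p, γ p * f p) ^ 2 ≤ ((b - a) / 2) ^ 2 := by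
  have h : 0 ≤ ∑ p, γ p * ((f p - a) * (b - f p)) :=
    Finset.sum_nonneg fun p _ => mul_nonneg (h0 p)
      (mul_nonneg (sub_nonneg.2 (hf p).1) (sub_nonneg.2 (hf p).2))
  have e : ∑ p, γ p * ((f p - a) * (b - f p))
      = (a + b) * (∑ p, γ p * f p) - (∑ p, γ p * f p ^ 2) - a * b * ∑ p, γ p := by
    simp only [Finset.mul_sum, ← Finset.sum_sub_distrib]
    exact Finset.sum_congr rfl fun p _ => by ring
  rw [e, h1] at h
  nlinarith [sq_nonneg ((∑ p, γ p * f p) - (a + b) / 2)]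

theorem sq_add_le_split (A B x : ℝ) (hx : 0 < x) (hx1 : x < 1) :
    (A + B) ^ 2 ≤ A ^ 2 / x + B ^ 2 / (1 - x) := by
  have h1 : 0 < 1 - x := sub_pos.2 hx1
  rw [div_add_div _ _ hx.ne' h1.ne', le_div_iff₀ (mul_pos hx h1)]
  nlinarith [sq_nonneg (A * (1 - x) - B * x)]

/-- Theorem 1 combined with Remark 1: jointly optimizing the power split `x` between
the two optimal beams and the per-subcarrier power fractions `γ` (with effective
bandwidth `β(γ) = √(Σ γ_p ω_p² − (Σ γ_p ω_p)²)`), the minimum achievable SPEB is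
`(1/g)·(2c/(b−a) + c·d/(ω·Ξ))²`. -/
theorem joint_power_subcarrier_optimization
    (c g d ω Ξ : ℝ) (hc : 0 < c) (hg : 0 < g) (hd : 0 < d) (hω : 0 < ω) (hΞ : 0 < Ξ)
    {ι : Type*} [Fintype ι] [Nonempty ι]
    (ωfreq : ι → ℝ) (a b : ℝ) (hab : a < b)
    (hrange : ∀ p, ωfreq p ∈ Set.Icc a b)
    (ha : ∃ p, ωfreq p = a) (hb : ∃ p, ωfreq p = b) :
    IsLeast
      {v : ℝ | ∃ x ∈ Set.Ioo (0 : ℝ) 1, ∃ γ : ι → ℝ,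
        (∀ p, 0 ≤ γ p) ∧ (∑ p, γ p) = 1 ∧
        0 < Real.sqrt ((∑ p, γ p * ωfreq p ^ 2) - (∑ p, γ p * ωfreq p) ^ 2) ∧
        v = c ^ 2 / (g * x * (Real.sqrt ((∑ p, γ p * ωfreq p ^ 2) - (∑ p, γ p * ωfreq p) ^ 2)) ^ 2)
            + c ^ 2 * d ^ 2 / (g * (1 - x) * ω ^ 2 * Ξ ^ 2)}
      ((1 / g) * (2 * c / (b - a) + c * d / (ω * Ξ)) ^ 2) := by
  have hba : 0 < b - a := sub_pos.2 hab
  constructor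
  · classical
    obtain ⟨pa, hpa⟩ := ha
    obtain ⟨pb, hpb⟩ := hb
    have hA : 0 < 2 * c / (b - a) := by positivity
    have hB : 0 < c * d / (ω * Ξ) := by positivity
    -- Equal power on the two edge subcarriers gives variance exactly `((b - a) / 2) ^ 2`.
    let γ : ι → ℝ := fun p => (if p = pa then 1 / 2 else 0) + (if p = pb then 1 / 2 else 0)
    have hsum : ∀ f : ι → ℝ, ∑ p, γ p * f p = (f pa + f pb) / 2 := by
      intro f
      simp only [γ, add_mul, ite_mul, zero_mul, Finset.sum_add_distrib, Finset.sum_ite_eq',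
        Finset.mem_univ, if_true]
      ring
    have hvar : (∑ p, γ p * ωfreq p ^ 2) - (∑ p, γ p * ωfreq p) ^ 2 = ((b - a) / 2) ^ 2 := by
      rw [hsum (fun p => ωfreq p ^ 2), hsum ωfreq, hpa, hpb]
      ring
    have hsqrt : Real.sqrt ((∑ p, γ p * ωfreq p ^ 2) - (∑ p, γ p * ωfreq p) ^ 2)
        = (b - a) / 2 := by
      rw [hvar, Real.sqrt_sq (by positivity)]
    refine ⟨(2 * c / (b - a)) / (2 * c / (b - a) + c * d / (ω * Ξ)),
      ⟨by positivity, (div_lt_one (by positivity)).2 (by linarith)⟩, γ, ?_, ?_, ?_, ?_⟩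
    · intro p
      simp only [γ]
      positivity
    · have := hsum fun _ => 1
      simp only [mul_one] at this
      rw [this]
      norm_num
    · rw [hsqrt]
      positivity
    · rw [hsqrt]
      have hx : 1 - (2 * c / (b - a)) / (2 * c / (b - a) + c * d / (ω * Ξ))
          = (c * d / (ω * Ξ)) / (2 * c / (b - a) + c * d / (ω * Ξ)) := by
        field_simp
        ring
      rw [hx]
      field_simp
  · rintro v ⟨x, ⟨hx0, hx1⟩, γ, h0, h1, hpos, rfl⟩
    have hvar := weighted_variance_le ωfreq γ a b hrange h0 h1
    rw [Real.sq_sqrt (Real.sqrt_pos.1 hpos).le]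
    have hV := Real.sqrt_pos.1 hpos
    generalize (∑ p, γ p * ωfreq p ^ 2) - (∑ p, γ p * ωfreq p) ^ 2 = V at hvar hV
    have hx' : 0 < 1 - x := sub_pos.2 hx1
    calc (1 / g) * (2 * c / (b - a) + c * d / (ω * Ξ)) ^ 2
        ≤ (1 / g) * ((2 * c / (b - a)) ^ 2 / x + (c * d / (ω * Ξ)) ^ 2 / (1 - x)) := by
          gcongr
          exact sq_add_le_split _ _ x hx0 hx1
      _ = c ^ 2 / (g * x * ((b - a) / 2) ^ 2)
            + c ^ 2 * d ^ 2 / (g * (1 - x) * ω ^ 2 * Ξ ^ 2) := by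
          field_simp
      _ ≤ _ := by gcongr
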